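/- arXiv:2402.04687 — 8 statements merged into one kernel-verified Lean document; each statement's English description precedes it below -/
import Mathlib

section
/- Let C be a salient closed convex cone in a finite-dimensional real normed vector space V and let α be a continuous antinorm associated with C. Then α^∨(p) > 0 for every p in the relative interior ri(C^∨) of the negative dual cone. -/
open Set

variable {V : Type*} [NormedAddCommGroup V] [NormedSpace ℝ V]

/-- `C` is a closed convex cone (containing the origin). -/
def IsClosedConvexCone (C : Set V) : Prop :=
  (0 : V) ∈ C ∧ IsClosed C ∧ Convex ℝ C ∧ ∀ c : ℝ, 0 < c → ∀ x ∈ C, c • x ∈ C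

/-- A cone is salient if it contains no nonzero linear subspace,
equivalently it contains no pair `x, -x` with `x ≠ 0`. -/
def IsSalientCone (C : Set V) : Prop := ∀ x ∈ C, x ≠ 0 → -x ∉ C

/-- The relative boundary of a set: the set minus its relative (intrinsic) interior. -/
def relBoundary (C : Set V) : Set V := C \ intrinsicInterior ℝ C

/-- `a` is an antinorm associated with the cone `C` : it takes values in `ℝ ∪ {-∞}`,
is positive on the relative interior of `C`, vanishes on the relative boundary of `C`,
is `-∞` off `C`, is positively homogeneous and superadditive (concave). -/
def IsAntinorm (C : Set V) (a : V → EReal) : Prop :=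
  (∀ v, a v ≠ ⊤) ∧
  (∀ v ∈ intrinsicInterior ℝ C, 0 < a v) ∧
  (∀ v ∈ relBoundary C, a v = 0) ∧
  (∀ v, v ∉ C → a v = ⊥) ∧
  (∀ c : ℝ, 0 < c → ∀ v, a (c • v) = (c : EReal) * a v) ∧
  (∀ v w, a v + a w ≤ a (v + w))

/-- The negative dual cone `C^∨ = {p : ⟨p,u⟩ ≤ 0 ∀ u ∈ C}`. -/
def negDual (C : Set V) : Set (V →L[ℝ] ℝ) := {p | ∀ u ∈ C, p u ≤ 0}

/-- The antisphere of radius `r`. -/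
def antisphere (a : V → EReal) (r : ℝ) : Set V := {v | a v = (r : EReal)}

/-- The dual function `α^∨(p) = -sup_{v ∈ S₁} ⟨p, v⟩`. -/
noncomputable def dualFn (a : V → EReal) (p : V →L[ℝ] ℝ) : EReal :=
  - sSup ((fun v => ((p v : ℝ) : EReal)) '' antisphere a 1)

/-- `p^∨_r` : the set of maximizers of `v ↦ ⟨p, v⟩` over the antisphere `S_r`. -/
def maxSet (a : V → EReal) (p : V →L[ℝ] ℝ) (r : ℝ) : Set V :=
  {v ∈ antisphere a r | ∀ w ∈ antisphere a r, p w ≤ p v}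

/-- `p^∨ = ⋃_{r ≥ 0} p^∨_r`. -/
def pDual (a : V → EReal) (p : V →L[ℝ] ℝ) : Set V := ⋃ r ∈ Ici (0 : ℝ), maxSet a p r

theorem aux_neg {V : Type*} [NormedAddCommGroup V] [NormedSpace ℝ V]
    (C : Set V) (hC : IsClosedConvexCone C) (hsal : IsSalientCone C)
    (p : V →L[ℝ] ℝ) (hp : p ∈ intrinsicInterior ℝ (negDual C)) (u : V) (hu : u ∈ C)
    (hu0 : u ≠ 0) : p u < 0 := by
  obtain ⟨h0, hcl, hcv, hsm⟩ := hC
  obtain ⟨q, s, hqs, hsq⟩ := geometric_hahn_banach_closed_point hcv hcl (hsal u hu hu0)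
  have hs : 0 < s := by simpa using hqs 0 h0
  have hqu : q u < 0 := by
    rw [map_neg] at hsq; linarith
  have hq : q ∈ negDual C := by
    intro c hc
    by_contra! h
    have := hqs _ (hsm (s / q c) (by positivity) c hc)
    rw [map_smul, smul_eq_mul, div_mul_cancel₀ _ h.ne'] at this
    exact lt_irrefl _ this
  rw [mem_intrinsicInterior] at hp
  obtain ⟨y, hy, rfl⟩ := hp
  have hyC : (y : V →L[ℝ] ℝ) ∈ negDual C := (interior_subset hy :)
  refine lt_of_le_of_ne (hyC u hu) fun hyu => ?_
  let f : ℝ → affineSpan ℝ (negDual C) := fun t =>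
    ⟨AffineMap.lineMap (y : V →L[ℝ] ℝ) q t,
      AffineMap.lineMap_mem t y.2 (subset_affineSpan ℝ _ hq)⟩
  have hf : Continuous f := Continuous.subtype_mk AffineMap.lineMap_continuous _
  have hf0 : f 0 = y := by ext1; simp [f]
  have hev : ∀ᶠ t in nhds (0 : ℝ), f t ∈ interior ((↑) ⁻¹' negDual C) :=
    hf.continuousAt.eventually_mem (isOpen_interior.mem_nhds (by rw [hf0]; exact hy))
  obtain ⟨ε, hε, hb⟩ := Metric.eventually_nhds_iff.1 hev
  have h1 := hb (y := -(ε / 2)) (by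
    rw [Real.dist_eq, sub_zero, abs_neg, abs_of_pos (by positivity)]; linarith)
  have h2 : (f (-(ε / 2)) : V →L[ℝ] ℝ) ∈ negDual C := (interior_subset h1 :)
  have h3 := h2 u hu
  simp only [f, AffineMap.lineMap_apply_module, add_apply,
    smul_apply, smul_eq_mul, hyu] at h3
  nlinarith

/-- For a salient closed convex cone `C` and a continuous antinorm `a`
associated with `C`, the dual function is positive on the relative interior of the
negative dual cone. -/
theorem statement2 {V : Type*} [NormedAddCommGroup V] [NormedSpace ℝ V] [FiniteDimensional ℝ V]
    (C : Set V) (hC : IsClosedConvexCone C) (hsal : IsSalientCone C)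
    (a : V → EReal) (ha : IsAntinorm C a) (hcont : ContinuousOn a C) :
    ∀ p ∈ intrinsicInterior ℝ (negDual C), 0 < dualFn a p := by
  intro p hp
  have hneg := aux_neg C hC hsal p hp
  obtain ⟨h0, hcl, hcv, hsm⟩ := hC
  obtain ⟨htop, hpos, hbd, hbot, hhom, -⟩ := ha
  have ha0 : a 0 ≠ 1 := by
    intro h
    have := hhom 2 (by norm_num) 0
    rw [smul_zero, h, mul_one] at this
    have h' : (1 : ℝ) = 2 := by exact_mod_cast this
    norm_num at h'
  have : ∃ δ : ℝ, 0 < δ ∧ ∀ v ∈ antisphere a 1, p v ≤ -δ := by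
    have hS : ∀ v ∈ antisphere a 1, v ∈ C ∧ v ≠ 0 := by
      intro v hv
      have hv1 : a v = 1 := by simpa [antisphere] using hv
      refine ⟨?_, ?_⟩
      · by_contra h
        rw [hbot v h] at hv1
        exact absurd hv1 (EReal.bot_ne_coe 1)
      · rintro rfl
        exact ha0 hv1
    have hK : IsCompact (C ∩ Metric.sphere (0 : V) 1) :=
      (isCompact_sphere (0 : V) 1).inter_left hcl
    have hmem : ∀ v ∈ antisphere a 1, ‖v‖⁻¹ • v ∈ C ∩ Metric.sphere (0 : V) 1 := by
      intro v hv
      obtain ⟨hvC, hv0⟩ := hS v hv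
      have := norm_pos_iff.2 hv0
      exact ⟨hsm _ (by positivity) v hvC, by simp [norm_smul, this.ne']⟩
    rcases (C ∩ Metric.sphere (0 : V) 1).eq_empty_or_nonempty with he | hne
    · refine ⟨1, one_pos, fun v hv => ?_⟩
      have := hmem v hv
      rw [he] at this
      exact this.elim
    obtain ⟨x, hx, hxm⟩ := hK.exists_isMaxOn hne (hcont.mono inter_subset_left)
    obtain ⟨z, hz, hzm⟩ := hK.exists_isMaxOn hne p.continuous.continuousOn
    have hz0 : p z < 0 := hneg z hz.1 (by
      rintro rfl
      simpa using hz.2)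
    obtain ⟨A, hA0, hA⟩ : ∃ A : ℝ, 0 < A ∧ a x ≤ A := by
      refine ⟨max 1 (a x).toReal, by positivity, ?_⟩
      exact (EReal.le_coe_toReal (htop x)).trans (by exact_mod_cast le_max_right _ _)
    refine ⟨-p z / A, div_pos (by linarith) hA0, fun v hv => ?_⟩
    obtain ⟨hvC, hv0⟩ := hS v hv
    have hn := norm_pos_iff.2 hv0
    have hv1 : a v = 1 := by simpa [antisphere] using hv
    have e1 : a (‖v‖⁻¹ • v) ≤ A := (hxm (hmem v hv)).trans hA
    rw [hhom _ (by positivity), hv1, mul_one] at e1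
    have e2 : ‖v‖⁻¹ ≤ A := by exact_mod_cast e1
    have e3 : p (‖v‖⁻¹ • v) ≤ p z := hzm (hmem v hv)
    rw [map_smul, smul_eq_mul, inv_mul_le_iff₀ hn] at e3
    have e4 : 1 ≤ ‖v‖ * A := by
      rwa [inv_le_iff_one_le_mul₀' hn] at e2
    have e5 : A⁻¹ ≤ ‖v‖ := by
      rwa [inv_le_iff_one_le_mul₀ hA0]
    rw [div_eq_mul_inv]
    nlinarith
  obtain ⟨δ, hδ, h⟩ := this
  have hle : sSup ((fun v => ((p v : ℝ) : EReal)) '' antisphere a 1) ≤ ((-δ : ℝ) : EReal) := by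
    apply sSup_le
    rintro _ ⟨v, hv, rfl⟩
    exact EReal.coe_le_coe_iff.2 (h v hv)
  unfold dualFn
  rw [EReal.lt_neg_comm, neg_zero]
  exact hle.trans_lt (by exact_mod_cast neg_neg_of_pos hδ)
end

section
/- Let C be a closed convex cone in a finite-dimensional real normed vector space V, let α be a continuous antinorm associated with C, and let p ∈ C^∨. Then the set p^∨ = ⋃_{r ≥ 0} p^∨_r is a closed convex cone. -/
open Set

variable {V : Type*} [NormedAddCommGroup V] [NormedSpace ℝ V]

/-- For a closed convex cone `C`, a continuous antinorm `a` associated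
with `C` and `p ∈ C^∨`, the set `p^∨ = ⋃_{r ≥ 0} p^∨_r` is a closed convex cone. -/
theorem statement4 {V : Type*} [NormedAddCommGroup V] [NormedSpace ℝ V] [FiniteDimensional ℝ V]
    (C : Set V) (hC : IsClosedConvexCone C)
    (a : V → EReal) (ha : IsAntinorm C a) (hcont : ContinuousOn a C)
    (p : V →L[ℝ] ℝ) (hp : p ∈ negDual C) :
    IsClosedConvexCone (pDual a p) := by
  obtain ⟨h0C, hCcl, hCconv, hCcone⟩ := hC
  obtain ⟨htop, hpos, hbd, hout, hhom, hsup⟩ := ha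
  have hnn : ∀ v ∈ C, 0 ≤ a v := by
    intro v hv
    by_cases h : v ∈ intrinsicInterior ℝ C
    · exact (hpos v h).le
    · exact (hbd v ⟨hv, h⟩).ge
  have hmem : ∀ v, 0 ≤ a v → v ∈ C := by
    intro v hv
    by_contra h
    rw [hout v h] at hv
    exact absurd hv (by simp)
  obtain ⟨f, hf⟩ : ∃ f : V → ℝ, f = fun v => (a v).toReal := ⟨_, rfl⟩
  have haf : ∀ v ∈ C, a v = (f v : EReal) := by
    intro v hv
    rw [hf]
    refine (EReal.coe_toReal (htop v) ?_).symm
    intro h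
    have := hnn v hv
    rw [h] at this
    exact absurd this (by simp)
  have hfnn : ∀ v ∈ C, 0 ≤ f v := by
    intro v hv
    have := hnn v hv
    rw [haf v hv] at this
    exact_mod_cast this
  have hfhom : ∀ c : ℝ, 0 < c → ∀ v ∈ C, f (c • v) = c * f v := by
    intro c hc v hv
    have := hhom c hc v
    rw [haf v hv, haf _ (hCcone c hc v hv)] at this
    exact_mod_cast this
  have hadd : ∀ v ∈ C, ∀ w ∈ C, v + w ∈ C := by
    intro v hv w hw
    exact hmem _ ((add_nonneg (hnn v hv) (hnn w hw)).trans (hsup v w))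
  have hfsup : ∀ v ∈ C, ∀ w ∈ C, f v + f w ≤ f (v + w) := by
    intro v hv w hw
    have := hsup v w
    rw [haf v hv, haf w hw, haf _ (hadd v hv w hw)] at this
    exact_mod_cast this
  have hf0 : f 0 = 0 := by
    have := hfhom 2 (by norm_num) 0 h0C
    rw [smul_zero] at this
    linarith
  have hfcont : ContinuousOn f C := by
    rw [hf]
    refine EReal.continuousOn_toReal.comp hcont ?_
    intro v hv
    simp [haf v hv]
  have hex : ∃ u ∈ C, 0 < f u := by
    obtain ⟨u, hu⟩ := Set.Nonempty.intrinsicInterior hCconv ⟨0, h0C⟩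
    have huC := intrinsicInterior_subset hu
    refine ⟨u, huC, ?_⟩
    have := hpos u hu
    rw [haf u huC] at this
    exact_mod_cast this
  have hanti : ∀ r : ℝ, 0 ≤ r → ∀ v, v ∈ antisphere a r ↔ v ∈ C ∧ f v = r := by
    intro r hr v
    constructor
    · intro h
      have h' : a v = (r : EReal) := h
      have hv : v ∈ C := hmem v (by rw [h']; exact_mod_cast hr)
      refine ⟨hv, ?_⟩
      rw [haf v hv] at h'
      exact_mod_cast h'
    · rintro ⟨hv, rfl⟩
      exact haf v hv
  have key : pDual a p = {v | v ∈ C ∧ ∀ w ∈ C, f v * p w ≤ f w * p v} := by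
    ext v
    simp only [pDual, maxSet, mem_iUnion, mem_Ici, mem_setOf_eq, exists_prop]
    constructor
    · rintro ⟨r, hr, hv, hmax⟩
      obtain ⟨hvC, hfv⟩ := (hanti r hr v).1 hv
      refine ⟨hvC, fun w hw => ?_⟩
      rcases hr.eq_or_lt with h | h
      · subst h
        have h1 := hmax 0 ((hanti 0 le_rfl 0).2 ⟨h0C, hf0⟩)
        rw [map_zero] at h1
        rw [hfv, zero_mul]
        exact mul_nonneg (hfnn w hw) h1
      · rcases (hfnn w hw).eq_or_lt with h2 | h2
        · rw [← h2, zero_mul, hfv]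
          exact mul_nonpos_of_nonneg_of_nonpos hr (hp w hw)
        · have hc : 0 < r / f w := div_pos h h2
          have h3 := hmax ((r / f w) • w) ((hanti r hr _).2 ⟨hCcone _ hc w hw, by
            rw [hfhom _ hc w hw]; field_simp⟩)
          rw [map_smul, smul_eq_mul] at h3
          have h4 := mul_le_mul_of_nonneg_left h3 h2.le
          rw [hfv]
          calc r * p w = f w * (r / f w * p w) := by field_simp
            _ ≤ _ := h4
    · rintro ⟨hvC, h⟩
      refine ⟨f v, hfnn v hvC, (hanti _ (hfnn v hvC) v).2 ⟨hvC, rfl⟩, fun w hw => ?_⟩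
      obtain ⟨hwC, hfw⟩ := (hanti _ (hfnn v hvC) w).1 hw
      rcases (hfnn v hvC).eq_or_lt with h2 | h2
      · obtain ⟨u, hu, hfu⟩ := hex
        have h3 := h u hu
        rw [← h2, zero_mul] at h3
        exact (hp w hwC).trans (nonneg_of_mul_nonneg_right h3 hfu)
      · have h3 := h w hwC
        rw [hfw] at h3
        exact le_of_mul_le_mul_left h3 h2
  have hcone : ∀ c : ℝ, 0 < c → ∀ x ∈ pDual a p, c • x ∈ pDual a p := by
    rw [key]
    rintro c hc x ⟨hx, h⟩
    refine ⟨hCcone c hc x hx, fun w hw => ?_⟩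
    rw [hfhom c hc x hx, map_smul, smul_eq_mul]
    have := mul_le_mul_of_nonneg_left (h w hw) hc.le
    linarith
  have hsum : ∀ x ∈ pDual a p, ∀ y ∈ pDual a p, x + y ∈ pDual a p := by
    rw [key]
    rintro x ⟨hx, h⟩ y ⟨hy, h'⟩
    refine ⟨hadd x hx y hy, fun w hw => ?_⟩
    have h1 := mul_le_mul_of_nonpos_right (hfsup x hx y hy) (hp w hw)
    have h2 := h w hw
    have h3 := h' w hw
    rw [map_add]
    linarith
  refine ⟨?_, ?_, ?_, hcone⟩
  · rw [key]
    refine ⟨h0C, fun w hw => ?_⟩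
    simp [hf0]
  · have : pDual a p = C ∩ ⋂ w ∈ C, {v | v ∈ C ∧ f v * p w ≤ f w * p v} := by
      rw [key]
      ext v
      simp only [mem_setOf_eq, mem_inter_iff, mem_iInter]
      exact ⟨fun h => ⟨h.1, fun w hw => ⟨h.1, h.2 w hw⟩⟩, fun h => ⟨h.1, fun w hw => (h.2 w hw).2⟩⟩
    rw [this]
    refine hCcl.inter (isClosed_biInter fun w hw => ?_)
    exact hCcl.isClosed_le (hfcont.mul continuousOn_const)
      (continuousOn_const.mul p.continuous.continuousOn)
  · rw [convex_iff_forall_pos]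
    intro x hx y hy s t hs ht _
    exact hsum _ (hcone s hs x hx) _ (hcone t ht y hy)
end

section
/- Let C be a closed convex cone in a finite-dimensional real normed vector space V, let α be a continuous antinorm associated with C, and let p ∈ C^∨ be such that p is not identically zero on C. Then α is additive on the cone p^∨: for all u, v ∈ p^∨ one has α(u + v) = α(u) + α(v) (so together with positive homogeneity, α is linear on p^∨). -/
open Set

variable {V : Type*} [NormedAddCommGroup V] [NormedSpace ℝ V]

/-- A functional in the negative dual that vanishes at a relative interior point vanishes on `C`. -/
lemma neg_of_mem_ri {V : Type*} [NormedAddCommGroup V] [NormedSpace ℝ V]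
    (C : Set V) (p : V →L[ℝ] ℝ) (hp : p ∈ negDual C) (hpz : ∃ u ∈ C, p u ≠ 0)
    (w : V) (hw : w ∈ intrinsicInterior ℝ C) : p w < 0 := by
  obtain ⟨x, hx, hpx⟩ := hpz
  have hwC : w ∈ C := intrinsicInterior_subset hw
  have hpx' : p x < 0 := lt_of_le_of_ne (hp x hx) hpx
  refine lt_of_le_of_ne (hp w hwC) fun h0 => ?_
  obtain ⟨y, hy, rfl⟩ := hw
  have hmem : ∀ t : ℝ, AffineMap.lineMap (y : V) x t ∈ affineSpan ℝ C := fun t =>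
    AffineMap.lineMap_mem t y.2 (subset_affineSpan ℝ C hx)
  let f : ℝ → affineSpan ℝ C := fun t => ⟨AffineMap.lineMap (y : V) x t, hmem t⟩
  have hf : Continuous f := Continuous.subtype_mk AffineMap.lineMap_continuous _
  have hf0 : f 0 = y := Subtype.ext (by simp [f])
  have hev : ∀ᶠ t in nhds (0 : ℝ), f t ∈ interior ((↑) ⁻¹' C : Set (affineSpan ℝ C)) :=
    hf.continuousAt.eventually_mem (isOpen_interior.mem_nhds (by rw [hf0]; exact hy))
  obtain ⟨ε, hε, hball⟩ := Metric.eventually_nhds_iff.1 hev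
  have h1 := hball (y := -(ε / 2)) (by
    rw [Real.dist_eq, sub_zero, abs_neg, abs_of_pos (by positivity)]; linarith)
  have h2 : AffineMap.lineMap (y : V) x (-(ε / 2)) ∈ C := by
    have h4 := interior_subset h1
    exact h4
  have h3 := hp _ h2
  rw [AffineMap.lineMap_apply] at h3
  simp only [vsub_eq_sub, vadd_eq_add, map_add, map_smul, map_sub, h0, smul_eq_mul] at h3
  nlinarith

/-- For a closed convex cone `C`, a continuous antinorm `a` associated with
`C`, and `p ∈ C^∨` not identically zero on `C`, the antinorm `a` is additive on the cone
`p^∨`. -/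
theorem statement6 {V : Type*} [NormedAddCommGroup V] [NormedSpace ℝ V] [FiniteDimensional ℝ V]
    (C : Set V) (hC : IsClosedConvexCone C)
    (a : V → EReal) (ha : IsAntinorm C a) (hcont : ContinuousOn a C)
    (p : V →L[ℝ] ℝ) (hp : p ∈ negDual C) (hpz : ∃ u ∈ C, p u ≠ 0) :
    ∀ u ∈ pDual a p, ∀ v ∈ pDual a p, a (u + v) = a u + a v := by
  obtain ⟨htop, -, hrb, hout, hhom, hsup⟩ := ha
  have hmemC : ∀ w, ∀ r : ℝ, a w = (r : EReal) → w ∈ C := by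
    intro w r h
    by_contra hw
    rw [hout w hw] at h
    exact EReal.bot_ne_coe r h
  have hneg : ∀ w, ∀ r : ℝ, 0 < r → a w = (r : EReal) → p w < 0 := by
    intro w r hr h
    refine neg_of_mem_ri C p hp hpz w ?_
    by_contra hw
    rw [hrb w ⟨hmemC w r h, hw⟩] at h
    exact hr.ne (by exact_mod_cast h)
  have hscale : ∀ w, ∀ r c : ℝ, 0 < c → a w = (r : EReal) →
      a (c • w) = ((c * r : ℝ) : EReal) := by
    intro w r c hc h
    rw [hhom c hc, h, EReal.coe_mul]
  -- for a maximizer `u` of radius `r`, compare with every vector of positive radius `t`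
  have hzero : ∀ u, u ∈ maxSet a p 0 → p u = 0 := by
    intro u hu
    have h1 := hu.2 ((1 / 2 : ℝ) • u) (by
      have := hscale u 0 (1 / 2) (by norm_num) hu.1
      rw [mul_zero] at this
      exact this)
    rw [map_smul, smul_eq_mul] at h1
    have h2 := hp u (hmemC u 0 hu.1)
    linarith
  have hkey : ∀ u, ∀ r : ℝ, 0 ≤ r → u ∈ maxSet a p r → ∀ w, ∀ t : ℝ, 0 < t →
      a w = (t : EReal) → r * p w ≤ t * p u := by
    intro u r hr hu w t ht hw
    rcases hr.eq_or_lt with rfl | hr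
    · rw [hzero u hu]; simp
    · have h1 := hu.2 ((r / t) • w) (by
        have := hscale w t (r / t) (by positivity) hw
        rw [div_mul_cancel₀ _ ht.ne'] at this
        exact this)
      rw [map_smul, smul_eq_mul, div_mul_eq_mul_div, div_le_iff₀ ht] at h1
      linarith
  intro u hu v hv
  simp only [pDual, mem_iUnion, mem_Ici] at hu hv
  obtain ⟨r, hr, hu⟩ := hu
  obtain ⟨s, hs, hv⟩ := hv
  have hau : a u = (r : EReal) := hu.1
  have hav : a v = (s : EReal) := hv.1
  have hle := hsup u v
  rw [hau, hav, ← EReal.coe_add] at hle ⊢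
  have hnt := htop (u + v)
  have hnb : a (u + v) ≠ ⊥ := fun h => by
    rw [h] at hle
    exact EReal.coe_ne_bot _ (le_bot_iff.1 hle)
  lift a (u + v) to ℝ using ⟨hnt, hnb⟩ with t ht
  have hle' : r + s ≤ t := by exact_mod_cast hle
  norm_cast
  by_contra hne
  have hlt : r + s < t := lt_of_le_of_ne hle' (Ne.symm hne)
  have htpos : 0 < t := by linarith
  have h1 := hkey u r hr hu (u + v) t htpos ht.symm
  have h2 := hkey v s hs hv (u + v) t htpos ht.symm
  have h3 := hneg (u + v) t htpos ht.symm
  rw [map_add] at h1 h2 h3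
  nlinarith
end

section
/- Let C be a closed convex cone in a finite-dimensional real normed vector space V and let p ∈ rb(C^∨) (the relative boundary of the negative dual cone) be such that p is not identically zero on C. Then ⟨p, u⟩ < 0 for all u ∈ ri C, and there exists a nonzero u ∈ rb C with ⟨p, u⟩ = 0. -/
open Set

variable {V : Type*} [NormedAddCommGroup V] [NormedSpace ℝ V]

/-- For a closed convex cone `C` and `p` in the relative boundary of `C^∨`
which is not identically zero on `C`, one has `⟨p, u⟩ < 0` on the relative interior of `C`
and there is a nonzero `u` in the relative boundary of `C` with `⟨p, u⟩ = 0`. -/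
theorem statement7 {V : Type*} [NormedAddCommGroup V] [NormedSpace ℝ V] [FiniteDimensional ℝ V]
    (C : Set V) (hC : IsClosedConvexCone C)
    (p : V →L[ℝ] ℝ) (hp : p ∈ relBoundary (negDual C)) (hpz : ∃ u ∈ C, p u ≠ 0) :
    (∀ u ∈ intrinsicInterior ℝ C, p u < 0) ∧ ∃ u ∈ relBoundary C, u ≠ 0 ∧ p u = 0 := by
  obtain ⟨h0, hcl, -, hsm⟩ := hC
  obtain ⟨hpC, hpi⟩ := hp
  have hpC : ∀ u ∈ C, p u ≤ 0 := hpC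
  have h1 : ∀ u ∈ intrinsicInterior ℝ C, p u < 0 := by
    intro u hu
    have huC : u ∈ C := intrinsicInterior_subset hu
    refine lt_of_le_of_ne (hpC u huC) fun hu0 => ?_
    obtain ⟨v, hv, hpv⟩ := hpz
    have hpv' : p v < 0 := lt_of_le_of_ne (hpC v hv) hpv
    obtain ⟨y, hy, rfl⟩ := mem_intrinsicInterior.1 hu
    have hvs : v ∈ affineSpan ℝ C := subset_affineSpan ℝ C hv
    have hmem : ∀ t : ℝ, AffineMap.lineMap (y : V) v t ∈ affineSpan ℝ C :=
      fun t => AffineMap.lineMap_mem t y.2 hvs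
    let f : ℝ → affineSpan ℝ C := fun t => ⟨AffineMap.lineMap (y : V) v t, hmem t⟩
    have hf : Continuous f := by
      refine Continuous.subtype_mk ?_ _
      exact AffineMap.lineMap_continuous
    have hf0 : f 0 = y := by
      apply Subtype.ext
      simp [f]
    have hev : ∀ᶠ t in nhds (0 : ℝ), (f t : V) ∈ C := by
      have := hf.continuousAt (x := 0)
      have hn : ((↑) ⁻¹' C : Set (affineSpan ℝ C)) ∈ nhds (f 0) := by
        rw [hf0]; exact mem_interior_iff_mem_nhds.1 hy
      exact this hn
    obtain ⟨ε, hε, hb⟩ := Metric.eventually_nhds_iff.1 hev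
    have hm := hb (y := -(ε / 2)) (by
      rw [Real.dist_eq, sub_zero, abs_neg, abs_of_pos (by linarith)]; linarith)
    have := hpC _ hm
    simp only [f, AffineMap.lineMap_apply_module, map_add, map_smul, hu0, smul_eq_mul] at this
    nlinarith
  refine ⟨h1, ?_⟩
  suffices h : ∃ u ∈ C, u ≠ 0 ∧ p u = 0 by
    obtain ⟨u, hu, hne, hz⟩ := h
    exact ⟨u, ⟨hu, fun hi => (h1 u hi).ne hz⟩, hne, hz⟩
  by_contra! hcon
  apply hpi
  apply interior_subset_intrinsicInterior
  have hneg : ∀ u ∈ C, u ≠ 0 → p u < 0 := fun u hu hne =>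
    lt_of_le_of_ne (hpC u hu) (hcon u hu hne)
  have hK : IsCompact (C ∩ Metric.sphere (0 : V) 1) := by
    haveI := FiniteDimensional.proper ℝ V
    exact (isCompact_sphere (0 : V) 1).inter_left hcl
  obtain ⟨v, hv, hpv⟩ := hpz
  have hv0 : v ≠ 0 := by rintro rfl; simp at hpv
  have hscale : ∀ u ∈ C, u ≠ 0 → ‖u‖⁻¹ • u ∈ C ∩ Metric.sphere (0 : V) 1 := by
    intro u hu hne
    refine ⟨hsm _ (inv_pos.2 (norm_pos_iff.2 hne)) u hu, ?_⟩
    rw [mem_sphere_zero_iff_norm, norm_smul, norm_inv, norm_norm,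
      inv_mul_cancel₀ (norm_ne_zero_iff.2 hne)]
  obtain ⟨w, hw, hmax⟩ := hK.exists_isMaxOn ⟨_, hscale v hv hv0⟩ p.continuous.continuousOn
  have hw0 : w ≠ 0 := by
    rintro rfl
    simpa using hw.2
  have hpw := hneg w hw.1 hw0
  rw [mem_interior_iff_mem_nhds, Metric.mem_nhds_iff]
  refine ⟨-p w, by linarith, fun q hq u hu => ?_⟩
  by_cases hu0 : u = 0
  · simp [hu0]
  have hun : 0 < ‖u‖ := norm_pos_iff.2 hu0
  have hle : p (‖u‖⁻¹ • u) ≤ p w := hmax (hscale u hu hu0)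
  rw [map_smul, smul_eq_mul, inv_mul_le_iff₀ hun] at hle
  have hq' : ‖q - p‖ < -p w := by rwa [← dist_eq_norm]
  have h3 : (q - p) u ≤ ‖q - p‖ * ‖u‖ := (le_abs_self _).trans ((q - p).le_opNorm u)
  have h4 : (q - p) u = q u - p u := rfl
  nlinarith
end

section
/- Let C be a salient closed convex cone in a finite-dimensional real normed vector space V and let α be a continuous antinorm associated with C whose dual function α^∨ is an antinorm associated with C^∨. Let p ∈ rb(C^∨) be such that p is not identically zero on C. Then p^∨₁ = ∅ (the supremum of ⟨p, ·⟩ over S₁ equals 0 and is not attained), p^∨ = p^∨₀, the set p^∨₀ contains a nonzero vector, and every nonzero element of p^∨₀ lies in rb C. -/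
open Set

variable {V : Type*} [NormedAddCommGroup V] [NormedSpace ℝ V]

theorem aux_ri {V : Type*} [NormedAddCommGroup V] [NormedSpace ℝ V]
    (C : Set V) (p : V →L[ℝ] ℝ) (hp : ∀ u ∈ C, p u ≤ 0) (v : V)
    (hv : v ∈ intrinsicInterior ℝ C) (hpv : p v = 0) (u : V) (hu : u ∈ C) : p u = 0 := by
  obtain ⟨y, hy, rfl⟩ := mem_intrinsicInterior.1 hv
  have huA : u ∈ affineSpan ℝ C := subset_affineSpan ℝ C hu
  let f : ℝ → affineSpan ℝ C := fun t =>
    ⟨AffineMap.lineMap (y : V) u t, AffineMap.lineMap_mem t y.2 huA⟩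
  have hf : Continuous f := by
    refine Continuous.subtype_mk ?_ _
    exact AffineMap.lineMap_continuous
  have h0 : f 0 = y := by
    apply Subtype.ext
    simp [f]
  have hn : ∀ᶠ t in nhds (0 : ℝ), f t ∈ interior ((↑) ⁻¹' C : Set (affineSpan ℝ C)) := by
    apply hf.continuousAt.eventually_mem
    rw [h0]
    exact isOpen_interior.mem_nhds hy
  obtain ⟨e, he, hb⟩ := Metric.eventually_nhds_iff.1 hn
  have h1 : f (-(e / 2)) ∈ interior ((↑) ⁻¹' C : Set (affineSpan ℝ C)) := by
    apply hb
    rw [Real.dist_eq, sub_zero, abs_neg, abs_of_pos (by linarith)]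
    linarith
  have h2 : AffineMap.lineMap (y : V) u (-(e / 2)) ∈ C := by
    have h5 : f (-(e / 2)) ∈ ((↑) ⁻¹' C : Set (affineSpan ℝ C)) := interior_subset h1
    exact h5
  have h3 := hp _ h2
  rw [AffineMap.lineMap_apply_module] at h3
  simp only [map_add, map_smul, smul_eq_mul, hpv, mul_zero, zero_add] at h3
  have h4 := hp u hu
  nlinarith

/-- Let `C` be a salient closed convex cone, `a` a continuous antinorm whose
dual function is an antinorm associated with `C^∨`, and let `p ∈ rb(C^∨)` be not identically
zero on `C`. Then `p^∨₁ = ∅` (the supremum of `⟨p,·⟩` over `S₁` is `0` and is not attained),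
`p^∨ = p^∨₀`, the set `p^∨₀` contains a nonzero vector, and every nonzero element of `p^∨₀`
lies in the relative boundary of `C`. -/
theorem statement10 {V : Type*} [NormedAddCommGroup V] [NormedSpace ℝ V] [FiniteDimensional ℝ V]
    (C : Set V) (hC : IsClosedConvexCone C) (hsal : IsSalientCone C)
    (a : V → EReal) (ha : IsAntinorm C a) (hcont : ContinuousOn a C)
    (hdual : IsAntinorm (negDual C) (dualFn a))
    (p : V →L[ℝ] ℝ) (hp : p ∈ relBoundary (negDual C)) (hpz : ∃ u ∈ C, p u ≠ 0) :
    maxSet a p 1 = ∅ ∧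
    sSup ((fun v => ((p v : ℝ) : EReal)) '' antisphere a 1) = 0 ∧
    pDual a p = maxSet a p 0 ∧
    (∃ v ∈ maxSet a p 0, v ≠ 0) ∧
    ∀ v ∈ maxSet a p 0, v ≠ 0 → v ∈ relBoundary C := by
  obtain ⟨hC0, hCcl, hCconv, hCsm⟩ := hC
  obtain ⟨hatop, hapos, hazero, habot, hahom, hasup⟩ := ha
  obtain ⟨u₀, hu₀, hpu₀⟩ := hpz
  have hpC : ∀ u ∈ C, p u ≤ 0 := hp.1
  have hri : ∀ v ∈ intrinsicInterior ℝ C, p v ≠ 0 := fun v hv h =>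
    hpu₀ (aux_ri C p hpC v hv h u₀ hu₀)
  have hsphC : ∀ r : ℝ, ∀ v ∈ antisphere a r, v ∈ C := by
    intro r v hv
    by_contra h
    have h1 : a v = (r : EReal) := hv
    rw [habot v h] at h1
    exact EReal.bot_ne_coe r h1
  have hsph0 : ∀ v ∈ antisphere a 0, v ∈ relBoundary C := by
    intro v hv
    refine ⟨hsphC 0 v hv, fun h => ?_⟩
    have h1 : a v = ((0 : ℝ) : EReal) := hv
    have h2 := hapos v h
    rw [h1] at h2
    simp at h2
  have hsphpos : ∀ v ∈ antisphere a 1, v ∈ intrinsicInterior ℝ C := by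
    intro v hv
    by_contra h
    have h1 : a v = ((1 : ℝ) : EReal) := hv
    rw [hazero v ⟨hsphC 1 v hv, h⟩] at h1
    norm_cast at h1
  have hSup : sSup ((fun v => ((p v : ℝ) : EReal)) '' antisphere a 1) = 0 := by
    have h := hdual.2.2.1 p hp
    unfold dualFn at h
    simpa using h
  have ha0 : a 0 = 0 := by
    by_cases h : (0 : V) ∈ intrinsicInterior ℝ C
    · exact absurd (map_zero p) (hri 0 h)
    · exact hazero 0 ⟨hC0, h⟩
  have h0S : (0 : V) ∈ antisphere a 0 := by
    change a 0 = ((0 : ℝ) : EReal)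
    rw [ha0]; simp
  have hmax1 : maxSet a p 1 = ∅ := by
    rw [Set.eq_empty_iff_forall_notMem]
    rintro v ⟨hv, hmax⟩
    have h1 : sSup ((fun v => ((p v : ℝ) : EReal)) '' antisphere a 1) ≤ ((p v : ℝ) : EReal) := by
      apply sSup_le
      rintro _ ⟨w, hw, rfl⟩
      exact EReal.coe_le_coe_iff.2 (hmax w hw)
    rw [hSup] at h1
    have h2 : 0 ≤ p v := by exact_mod_cast h1
    exact hri v (hsphpos v hv) (le_antisymm (hpC v (hsphC 1 v hv)) h2)
  refine ⟨hmax1, hSup, ?_, ?_, fun v hv _ => hsph0 v hv.1⟩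
  · apply Set.Subset.antisymm
    · intro v hv
      simp only [pDual, Set.mem_iUnion, Set.mem_Ici] at hv
      obtain ⟨r, hr, hv⟩ := hv
      rcases hr.eq_or_lt with rfl | hr
      · exact hv
      · exfalso
        have : r⁻¹ • v ∈ maxSet a p 1 := by
          refine ⟨?_, fun w hw => ?_⟩
          · change a (r⁻¹ • v) = ((1 : ℝ) : EReal)
            have h1 : a v = (r : EReal) := hv.1
            rw [hahom _ (inv_pos.2 hr), h1, ← EReal.coe_mul, inv_mul_cancel₀ hr.ne']
          · have h1 : a w = ((1 : ℝ) : EReal) := hw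
            have h2 : r • w ∈ antisphere a r := by
              change a (r • w) = (r : EReal)
              rw [hahom _ hr, h1, ← EReal.coe_mul, mul_one]
            have h3 := hv.2 _ h2
            rw [map_smul, smul_eq_mul] at h3 ⊢
            rw [inv_mul_eq_div, le_div_iff₀ hr]
            linarith
        rw [hmax1] at this
        exact this
    · intro v hv
      simp only [pDual, Set.mem_iUnion, Set.mem_Ici]
      exact ⟨0, le_rfl, hv⟩
  · by_contra hno
    push Not at hno
    have hneg : ∀ v ∈ C, v ≠ 0 → p v < 0 := by
      intro v hv hv0
      refine lt_of_le_of_ne (hpC v hv) fun h => hv0 (hno v ⟨?_, fun w hw => ?_⟩)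
      · change a v = ((0 : ℝ) : EReal)
        rw [hazero v ⟨hv, fun h' => hri v h' h⟩]; simp
      · rw [h]; exact hpC w (hsphC 0 w hw)
    have hu₀0 : u₀ ≠ 0 := by
      rintro rfl
      exact hpu₀ (map_zero p)
    have hK : IsCompact (Metric.sphere (0 : V) 1 ∩ C) := (isCompact_sphere 0 1).inter_right hCcl
    have hKmem : ∀ v ∈ C, v ≠ 0 → ‖v‖⁻¹ • v ∈ Metric.sphere (0 : V) 1 ∩ C := by
      intro v hv hv0
      refine ⟨?_, hCsm _ (inv_pos.2 (norm_pos_iff.2 hv0)) v hv⟩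
      rw [mem_sphere_zero_iff_norm, norm_smul, norm_inv, norm_norm,
        inv_mul_cancel₀ (norm_ne_zero_iff.2 hv0)]
    obtain ⟨m, hm, hmmax⟩ := hK.exists_isMaxOn ⟨_, hKmem u₀ hu₀ hu₀0⟩ p.continuous.continuousOn
    have hm0 : m ≠ 0 := by
      rintro rfl
      simpa using hm.1
    have hpm := hneg m hm.2 hm0
    have hbd : ∀ v ∈ C, p v ≤ p m * ‖v‖ := by
      intro v hv
      by_cases hv0 : v = 0
      · simp [hv0]
      · have h1 : p (‖v‖⁻¹ • v) ≤ p m := hmmax (hKmem v hv hv0)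
        have hn := norm_pos_iff.2 hv0
        rwa [map_smul, smul_eq_mul, inv_mul_eq_div, div_le_iff₀ hn] at h1
    have hlt : ∀ᶠ v in nhdsWithin (0 : V) C, a v < 1 := by
      apply (hcont 0 hC0).eventually_lt_const
      rw [ha0]; exact zero_lt_one
    rw [eventually_nhdsWithin_iff, Metric.eventually_nhds_iff] at hlt
    obtain ⟨d, hd, hlt⟩ := hlt
    have hle : sSup ((fun v => ((p v : ℝ) : EReal)) '' antisphere a 1) ≤
        ((p m * d : ℝ) : EReal) := by
      apply sSup_le
      rintro _ ⟨w, hw, rfl⟩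
      apply EReal.coe_le_coe_iff.2
      have hwC := hsphC 1 w hw
      have hdw : d ≤ ‖w‖ := by
        by_contra h
        have h1 : a w < 1 := hlt (by simpa using h) hwC
        have h2 : a w = ((1 : ℝ) : EReal) := hw
        rw [h2] at h1
        simp at h1
      have := hbd w hwC
      nlinarith
    rw [hSup] at hle
    have : 0 ≤ p m * d := by exact_mod_cast hle
    nlinarith
end

section
/- Let h₁ ≤ 0 and h₂ ≤ 0 be real numbers. Then sup{h₁x + h₂y : x > 0, y > 0, xy = x + y} = −(√(−h₁) + √(−h₂))². Moreover, if h₁ < 0 and h₂ < 0, this supremum is attained at (x, y) = (√(h₂/h₁) + 1, √(h₁/h₂) + 1), and equals h₁ + h₂ − 2√(h₁h₂). (In the language of antinorms: for the antinorm α(x, y) = xy/(x + y) on the quadrant C = {(x, y) : x ≥ 0, y ≥ 0}, the dual function satisfies α^∨(h₁, h₂) = (√(−h₁) + √(−h₂))² for (h₁, h₂) in the negative dual cone C^∨ = {(h₁, h₂) : h₁ ≤ 0, h₂ ≤ 0}.) -/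
open Set

variable {V : Type*} [NormedAddCommGroup V] [NormedSpace ℝ V]

/-- For `h₁ ≤ 0`, `h₂ ≤ 0`,
`sup {h₁ x + h₂ y : x > 0, y > 0, xy = x + y} = -(√(-h₁) + √(-h₂))²`, i.e. the dual
function of the antinorm `α(x,y) = xy/(x+y)` on the quadrant is
`α^∨(h₁,h₂) = (√(-h₁) + √(-h₂))²` on the negative dual cone. Moreover for `h₁ < 0`,
`h₂ < 0` the supremum is attained at `(√(h₂/h₁) + 1, √(h₁/h₂) + 1)` and equals
`h₁ + h₂ - 2√(h₁h₂)`. -/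
theorem statement14 (h₁ h₂ : ℝ) (hh₁ : h₁ ≤ 0) (hh₂ : h₂ ≤ 0) :
    sSup {z : ℝ | ∃ x y : ℝ, 0 < x ∧ 0 < y ∧ x * y = x + y ∧ z = h₁ * x + h₂ * y}
      = -(Real.sqrt (-h₁) + Real.sqrt (-h₂)) ^ 2 ∧
    (h₁ < 0 → h₂ < 0 →
      (0 < Real.sqrt (h₂ / h₁) + 1 ∧ 0 < Real.sqrt (h₁ / h₂) + 1 ∧
        (Real.sqrt (h₂ / h₁) + 1) * (Real.sqrt (h₁ / h₂) + 1)
          = (Real.sqrt (h₂ / h₁) + 1) + (Real.sqrt (h₁ / h₂) + 1) ∧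
        h₁ * (Real.sqrt (h₂ / h₁) + 1) + h₂ * (Real.sqrt (h₁ / h₂) + 1)
          = -(Real.sqrt (-h₁) + Real.sqrt (-h₂)) ^ 2) ∧
      -(Real.sqrt (-h₁) + Real.sqrt (-h₂)) ^ 2 = h₁ + h₂ - 2 * Real.sqrt (h₁ * h₂)) := by
  obtain ⟨a, ha, rfl⟩ : ∃ a : ℝ, 0 ≤ a ∧ h₁ = -a ^ 2 :=
    ⟨Real.sqrt (-h₁), Real.sqrt_nonneg _, by rw [Real.sq_sqrt (by linarith)]; ring⟩
  obtain ⟨b, hb, rfl⟩ : ∃ b : ℝ, 0 ≤ b ∧ h₂ = -b ^ 2 :=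
    ⟨Real.sqrt (-h₂), Real.sqrt_nonneg _, by rw [Real.sq_sqrt (by linarith)]; ring⟩
  rw [neg_neg, neg_neg, Real.sqrt_sq ha, Real.sqrt_sq hb]
  refine ⟨?_, ?_⟩
  · apply csSup_eq_of_forall_le_of_forall_lt_exists_gt
    · exact ⟨_, 2, 2, by norm_num, by norm_num, by norm_num, rfl⟩
    · rintro z ⟨x, y, hx, hy, hxy, rfl⟩
      have h1 : 0 < x - 1 := by
        by_contra h
        nlinarith
      have h2 : 0 < y - 1 := by
        by_contra h
        nlinarith
      have h3 : (x - 1) * (y - 1) = 1 := by linarith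
      have h4 : 0 ≤ (y - 1) * (a * (x - 1) - b) ^ 2 := by positivity
      have h5 : (y - 1) * (a * (x - 1) - b) ^ 2
          = a ^ 2 * (x - 1) * ((x - 1) * (y - 1)) - 2 * a * b * ((x - 1) * (y - 1))
            + b ^ 2 * (y - 1) := by ring
      rw [h5, h3] at h4
      linarith
    · intro w hw
      obtain ⟨e, he, hew⟩ : ∃ e : ℝ, 0 < e ∧ e * (a + b) < -(a + b) ^ 2 - w := by
        refine ⟨(-(a + b) ^ 2 - w) / (a + b + 1), ?_, ?_⟩
        · exact div_pos (by linarith) (by linarith)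
        · rw [div_mul_eq_mul_div, div_lt_iff₀ (by linarith)]
          nlinarith
      have hae : 0 < a + e := by linarith
      have hbe : 0 < b + e := by linarith
      refine ⟨_, ⟨(b + e) / (a + e) + 1, (a + e) / (b + e) + 1, by positivity, by positivity,
        ?_, rfl⟩, ?_⟩
      · field_simp
        ring
      · have k1 : a ^ 2 * ((b + e) / (a + e)) ≤ a * (b + e) := by
          rw [← mul_div_assoc, div_le_iff₀ hae]
          have : 0 ≤ a * (b + e) * e := by positivity
          linarith
        have k2 : b ^ 2 * ((a + e) / (b + e)) ≤ b * (a + e) := by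
          rw [← mul_div_assoc, div_le_iff₀ hbe]
          have : 0 ≤ b * (a + e) * e := by positivity
          linarith
        linarith
  · intro h1 h2
    have ha' : 0 < a := lt_of_le_of_ne ha (by rintro rfl; norm_num at h1)
    have hb' : 0 < b := lt_of_le_of_ne hb (by rintro rfl; norm_num at h2)
    have e1 : Real.sqrt (-b ^ 2 / -a ^ 2) = b / a := by
      rw [neg_div_neg_eq, ← div_pow, Real.sqrt_sq (by positivity)]
    have e2 : Real.sqrt (-a ^ 2 / -b ^ 2) = a / b := by
      rw [neg_div_neg_eq, ← div_pow, Real.sqrt_sq (by positivity)]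
    have e3 : Real.sqrt (-a ^ 2 * -b ^ 2) = a * b := by
      rw [neg_mul_neg, ← mul_pow, Real.sqrt_sq (by positivity)]
    rw [e1, e2, e3]
    refine ⟨⟨by positivity, by positivity, ?_, ?_⟩, by ring⟩
    · field_simp
      ring
    · field_simp
      ring
end

section
/- Let r ≥ 1, let C = {u ∈ ℝ^{r+1} : u₀ ≥ √(u₁² + ⋯ + u_r²)} be the forward light cone, and let α(u) = √(u₀² − u₁² − ⋯ − u_r²) for u ∈ C and α(u) = −∞ otherwise; identify (ℝ^{r+1})* with ℝ^{r+1} via the standard pairing ⟨h, u⟩ = Σᵢ hᵢuᵢ. Then the negative dual cone is C^∨ = {h ∈ ℝ^{r+1} : h₀ ≤ 0 and h₀² ≥ h₁² + ⋯ + h_r²}, and the dual function satisfies α^∨(h) = √(h₀² − h₁² − ⋯ − h_r²) for every h ∈ C^∨. -/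
open Set

variable {V : Type*} [NormedAddCommGroup V] [NormedSpace ℝ V]

/-- The forward light cone `{u : u₀ ≥ √(u₁² + ⋯ + u_r²)}` in `ℝ^{r+1}`. -/
noncomputable def lightCone (r : ℕ) : Set (EuclideanSpace ℝ (Fin (r + 1))) :=
  {u | Real.sqrt (∑ i ∈ Finset.univ.filter (fun i => i ≠ 0), (u i) ^ 2) ≤ u 0}

/-- The Lorentzian antinorm `α(u) = √(u₀² - u₁² - ⋯ - u_r²)` on the forward light cone,
extended by `-∞` off the cone. -/
noncomputable def lightAntinorm (r : ℕ) (u : EuclideanSpace ℝ (Fin (r + 1))) : EReal :=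
  if Real.sqrt (∑ i ∈ Finset.univ.filter (fun i => i ≠ 0), (u i) ^ 2) ≤ u 0 then
    ((Real.sqrt ((u 0) ^ 2 - ∑ i ∈ Finset.univ.filter (fun i => i ≠ 0), (u i) ^ 2) : ℝ) : EReal)
  else ⊥

lemma aux_split {n : ℕ} (f : Fin (n + 1) → ℝ) :
    ∑ i, f i = f 0 + ∑ i ∈ Finset.univ.filter (fun i => i ≠ 0), f i := by
  rw [Finset.filter_ne' Finset.univ (0 : Fin (n+1))]
  exact (Finset.add_sum_erase _ _ (Finset.mem_univ 0)).symm

lemma aux_cs {n : ℕ} (h u : Fin (n + 1) → ℝ) :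
    |∑ i ∈ Finset.univ.filter (fun i => i ≠ 0), h i * u i| ≤
      √(∑ i ∈ Finset.univ.filter (fun i => i ≠ 0), h i ^ 2) *
      √(∑ i ∈ Finset.univ.filter (fun i => i ≠ 0), u i ^ 2) := by
  rw [← Real.sqrt_mul (Finset.sum_nonneg fun i _ => sq_nonneg _)]
  exact Real.abs_le_sqrt (Finset.sum_mul_sq_le_sq_mul_sq _ _ _)

lemma aux_vec {n : ℕ} (h : Fin (n + 1) → ℝ) (x c : ℝ) :
    ∃ u : EuclideanSpace ℝ (Fin (n + 1)), u 0 = x ∧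
      ∑ i ∈ Finset.univ.filter (fun i => i ≠ 0), u i ^ 2 =
        c ^ 2 * ∑ i ∈ Finset.univ.filter (fun i => i ≠ 0), h i ^ 2 ∧
      ∑ i ∈ Finset.univ.filter (fun i => i ≠ 0), h i * u i =
        c * ∑ i ∈ Finset.univ.filter (fun i => i ≠ 0), h i ^ 2 := by
  refine ⟨WithLp.toLp 2 (fun i => if i = 0 then x else c * h i), by simp, ?_, ?_⟩ <;>
  · rw [Finset.mul_sum]
    refine Finset.sum_congr rfl fun i hi => ?_
    have : i ≠ 0 := by simpa using hi
    simp only [this, if_false]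
    ring

/-- identifying `(ℝ^{r+1})*` with `ℝ^{r+1}` via the standard pairing
`⟨h, u⟩ = ∑ i, hᵢ uᵢ`, the negative dual cone of the forward light cone is
`{h : h₀ ≤ 0, h₀² ≥ h₁² + ⋯ + h_r²}`, and on it the dual function of
`α(u) = √(u₀² - u₁² - ⋯ - u_r²)` is `α^∨(h) = √(h₀² - h₁² - ⋯ - h_r²)`. -/
theorem statement16 (r : ℕ) (hr : 1 ≤ r) :
    {h : EuclideanSpace ℝ (Fin (r + 1)) | ∀ u ∈ lightCone r, ∑ i, h i * u i ≤ 0}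
      = {h | h 0 ≤ 0 ∧ ∑ i ∈ Finset.univ.filter (fun i => i ≠ 0), (h i) ^ 2 ≤ (h 0) ^ 2} ∧
    ∀ h : EuclideanSpace ℝ (Fin (r + 1)), h 0 ≤ 0 →
      ∑ i ∈ Finset.univ.filter (fun i => i ≠ 0), (h i) ^ 2 ≤ (h 0) ^ 2 →
      - sSup ((fun v => ((∑ i, h i * v i : ℝ) : EReal)) '' {v | lightAntinorm r v = 1})
        = ((Real.sqrt ((h 0) ^ 2 - ∑ i ∈ Finset.univ.filter (fun i => i ≠ 0), (h i) ^ 2) : ℝ)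
            : EReal) := by
  have hnn : ∀ h : Fin (r + 1) → ℝ,
      0 ≤ ∑ i ∈ Finset.univ.filter (fun i => i ≠ 0), h i ^ 2 :=
    fun h => Finset.sum_nonneg fun i _ => sq_nonneg _
  constructor
  · ext h
    simp only [mem_ofPred_eq, lightCone]
    have hH := hnn h
    constructor
    · intro hu
      have h0 : h 0 ≤ 0 := by
        obtain ⟨u, u0, uU, uD⟩ := aux_vec h 1 0
        have := hu u (by rw [uU, u0]; simp)
        rw [aux_split, uD, u0] at this
        linarith
      refine ⟨h0, ?_⟩
      obtain ⟨u, u0, uU, uD⟩ := aux_vec h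
        (√(∑ i ∈ Finset.univ.filter (fun i => i ≠ 0), h i ^ 2)) 1
      have := hu u (by rw [uU, u0]; simp)
      rw [aux_split, uD, u0] at this
      generalize ∑ i ∈ Finset.univ.filter (fun i => i ≠ 0), h i ^ 2 = H at *
      have hs := Real.sq_sqrt hH
      have hs0 := Real.sqrt_nonneg H
      by_contra hc
      push Not at hc
      have : -h 0 < √H := by
        apply Real.lt_sqrt_of_sq_lt
        linarith [neg_sq (h 0)]
      nlinarith
    · rintro ⟨h0, hle⟩ u hu
      rw [aux_split]
      have hcs := (abs_le.1 (aux_cs h u)).2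
      have hU := Real.sqrt_nonneg (∑ i ∈ Finset.univ.filter (fun i => i ≠ 0), u i ^ 2)
      have h1 : √(∑ i ∈ Finset.univ.filter (fun i => i ≠ 0), h i ^ 2) ≤ -h 0 :=
        Real.sqrt_le_iff.2 ⟨by linarith, by linarith [neg_sq (h 0)]⟩
      have := mul_le_mul h1 hu hU (by linarith)
      linarith
  · intro h h0 hle
    have hH := hnn h
    have key : sSup ((fun v => ((∑ i, h i * v i : ℝ) : EReal)) '' {v | lightAntinorm r v = 1})
        = ((-√((h 0) ^ 2 - ∑ i ∈ Finset.univ.filter (fun i => i ≠ 0), (h i) ^ 2) : ℝ)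
            : EReal) := by
      apply le_antisymm
      · apply sSup_le
        rintro _ ⟨v, hv, rfl⟩
        simp only [mem_ofPred_eq, lightAntinorm] at hv
        split_ifs at hv with hc
        · have hv1 : √((v 0) ^ 2 - ∑ i ∈ Finset.univ.filter (fun i => i ≠ 0), (v i) ^ 2) = 1 := by
            exact_mod_cast hv
          rw [Real.sqrt_eq_one] at hv1
          apply EReal.coe_le_coe_iff.2
          rw [aux_split]
          have hcs := (abs_le.1 (aux_cs h v)).2
          have hU := hnn v
          generalize ∑ i ∈ Finset.univ.filter (fun i => i ≠ 0), h i * v i = D at *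
          generalize ∑ i ∈ Finset.univ.filter (fun i => i ≠ 0), h i ^ 2 = H at *
          generalize ∑ i ∈ Finset.univ.filter (fun i => i ≠ 0), v i ^ 2 = U at *
          have e1 := Real.sq_sqrt hH
          have e2 := Real.sq_sqrt hU
          have p1 := Real.sqrt_nonneg H
          have p2 := Real.sqrt_nonneg U
          have h1 : √H ≤ -h 0 :=
            Real.sqrt_le_iff.2 ⟨by linarith, by linarith [neg_sq (h 0)]⟩
          have h2 := mul_le_mul h1 hc p2 (by linarith)
          have h3 : √(h 0 ^ 2 - H) ≤ -h 0 * v 0 - √H * √U := by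
            rw [Real.sqrt_le_iff]
            refine ⟨by linarith, ?_⟩
            generalize √H = x at *
            generalize √U = y at *
            subst e1 e2
            have : v 0 ^ 2 = 1 + y ^ 2 := by linarith
            have h4 : (-h 0 * v 0 - x * y) ^ 2
              = (h 0 ^ 2 - x ^ 2) * (v 0 ^ 2 - y ^ 2) + (h 0 * y + x * v 0) ^ 2 := by ring
            rw [h4, hv1]
            nlinarith [sq_nonneg (h 0 * y + x * v 0)]
          linarith
        · exact absurd hv.symm (EReal.coe_ne_bot 1)
      · rw [← EReal.ge_of_forall_gt_iff_ge]
        intro z hz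
        have hz : z < -√((h 0) ^ 2 - ∑ i ∈ Finset.univ.filter (fun i => i ≠ 0), (h i) ^ 2) := by
          exact_mod_cast hz
        have hm := Real.sqrt_nonneg
          ((h 0) ^ 2 - ∑ i ∈ Finset.univ.filter (fun i => i ≠ 0), (h i) ^ 2)
        have hs : 0 < -z := by linarith
        obtain ⟨s, rfl⟩ : ∃ s, z = -s := ⟨-z, by ring⟩
        rw [neg_neg] at hs
        have hz2 : (h 0) ^ 2 - ∑ i ∈ Finset.univ.filter (fun i => i ≠ 0), (h i) ^ 2 < s ^ 2 :=
          (Real.sqrt_lt' hs).1 (by linarith)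
        obtain ⟨v, v0, vU, vD⟩ := aux_vec h
          (√(s ^ 2 + ∑ i ∈ Finset.univ.filter (fun i => i ≠ 0), h i ^ 2) / s) (1 / s)
        have hval : (-s : ℝ) ≤ ∑ i, h i * v i := by
          rw [aux_split, vD, v0]
          generalize ∑ i ∈ Finset.univ.filter (fun i => i ≠ 0), h i ^ 2 = H at *
          have e : h 0 * (√(s ^ 2 + H) / s) + 1 / s * H = (h 0 * √(s ^ 2 + H) + H) / s := by ring
          rw [e, le_div_iff₀ hs]
          have q := Real.sq_sqrt (show 0 ≤ s ^ 2 + H by positivity)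
          have : -h 0 ≤ √(s ^ 2 + H) := Real.le_sqrt_of_sq_le (by linarith [neg_sq (h 0)])
          nlinarith [Real.sqrt_nonneg (s ^ 2 + H)]
        refine le_trans (EReal.coe_le_coe_iff.2 hval) (le_sSup ⟨v, ?_, rfl⟩)
        simp only [mem_ofPred_eq, lightAntinorm]
        rw [vU, v0]
        generalize ∑ i ∈ Finset.univ.filter (fun i => i ≠ 0), h i ^ 2 = H at *
        have q := Real.sq_sqrt (show 0 ≤ s ^ 2 + H by positivity)
        have e : (√(s ^ 2 + H) / s) ^ 2 - (1 / s) ^ 2 * H = 1 := by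
          rw [div_pow, q]
          field_simp
          ring
        rw [if_pos, e]
        · simp
        · exact Real.sqrt_le_iff.2 ⟨by positivity, by linarith⟩
    rw [key, ← EReal.coe_neg, neg_neg]
end

section
/- Let C = {(x, y) ∈ ℝ² : y ≥ |x|} and define α : ℝ² → ℝ ∪ {−∞} by α(x, y) = y − x if x ≥ 0 and y ≥ |x|; α(x, y) = √(y² − x²) if x < 0 and y ≥ |x|; α(x, y) = −∞ if y < |x|. Then α is a continuous antinorm associated with C, and for the linear functional p(x, y) = x − y one has: p lies in the relative boundary rb(C^∨) of the negative dual cone, p is not identically zero on C, p^∨ = {(x, y) : 0 ≤ x ≤ y}, and ri(p^∨) ⊆ ri C. In particular, α is linear on a subcone adjacent to the boundary of C. -/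
open Set

variable {V : Type*} [NormedAddCommGroup V] [NormedSpace ℝ V]

/-- The antinorm of Example 1: on the cone `C = {(x,y) : y ≥ |x|}` it equals `y - x`
for `x ≥ 0` and `√(y² - x²)` for `x < 0`, and `-∞` off `C`. -/
noncomputable def exAntinorm (v : ℝ × ℝ) : EReal :=
  if 0 ≤ v.1 ∧ |v.1| ≤ v.2 then ((v.2 - v.1 : ℝ) : EReal)
  else if |v.1| ≤ v.2 then ((Real.sqrt (v.2 ^ 2 - v.1 ^ 2) : ℝ) : EReal)
  else ⊥

/-- The linear functional `p(x, y) = x - y` on `ℝ × ℝ`. -/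
noncomputable def exFunctional : (ℝ × ℝ) →L[ℝ] ℝ :=
  ContinuousLinearMap.fst ℝ ℝ ℝ - ContinuousLinearMap.snd ℝ ℝ ℝ


lemma ri_eq_interior {W : Type*} [NormedAddCommGroup W] [NormedSpace ℝ W] {s : Set W}
    (hs : (interior s).Nonempty) : intrinsicInterior ℝ s = interior s := by
  have htop : affineSpan ℝ s = ⊤ := by
    have h1 := isOpen_interior.affineSpan_eq_top hs
    exact top_le_iff.1 (h1 ▸ affineSpan_mono ℝ interior_subset)
  have hopen : IsOpen ((affineSpan ℝ s : AffineSubspace ℝ W) : Set W) := by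
    rw [htop]; exact isOpen_univ
  unfold intrinsicInterior
  have h := hopen.isOpenEmbedding_subtypeVal
  have h2 := h.isOpenMap.preimage_interior_eq_interior_preimage h.continuous s
  have h3 := congrArg (fun t => (Subtype.val '' t : Set W)) h2
  refine h3.symm.trans ?_
  rw [Set.image_preimage_eq_of_subset]
  rw [Subtype.range_coe]
  exact interior_subset.trans (subset_affineSpan ℝ s)

lemma interior_cone : interior {v : ℝ × ℝ | |v.1| ≤ v.2} = {v : ℝ × ℝ | |v.1| < v.2} := by
  apply subset_antisymm
  · intro v hv
    rw [mem_interior_iff_mem_nhds, Metric.mem_nhds_iff] at hv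
    obtain ⟨e, he, hb⟩ := hv
    have : (v.1, v.2 - e / 2) ∈ Metric.ball v e := by
      rw [Metric.mem_ball, Prod.dist_eq, Real.dist_eq, Real.dist_eq]
      simp only [sub_self, abs_zero, sub_sub_cancel_left, abs_neg]
      rw [abs_of_pos (by linarith), max_lt_iff]
      constructor <;> linarith
    have := hb this
    simp only [mem_setOf_eq] at this ⊢
    linarith
  · apply interior_maximal
    · intro v hv
      exact le_of_lt (by simpa using hv)
    · exact isOpen_lt (by fun_prop) (by fun_prop)

lemma ri_cone : intrinsicInterior ℝ {v : ℝ × ℝ | |v.1| ≤ v.2} = {v : ℝ × ℝ | |v.1| < v.2} := by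
  rw [ri_eq_interior, interior_cone]
  rw [interior_cone]
  exact ⟨(0, 1), by simp⟩

/-- On the cone, the example is a minimum of two functions. -/
noncomputable def realAnti (v : ℝ × ℝ) : ℝ := min (Real.sqrt (v.2 ^ 2 - v.1 ^ 2)) (v.2 - v.1)

lemma exAntinorm_of_mem {v : ℝ × ℝ} (hv : |v.1| ≤ v.2) :
    exAntinorm v = (realAnti v : EReal) := by
  have h := abs_le.1 hv
  unfold exAntinorm realAnti
  by_cases h0 : 0 ≤ v.1
  · rw [if_pos ⟨h0, hv⟩, min_eq_right]
    apply Real.le_sqrt_of_sq_le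
    nlinarith
  · rw [if_neg (fun h => h0 h.1), if_pos hv, min_eq_left]
    push Not at h0
    apply Real.sqrt_le_iff.2
    constructor
    · linarith
    · nlinarith

lemma exAntinorm_of_not_mem {v : ℝ × ℝ} (hv : ¬ |v.1| ≤ v.2) : exAntinorm v = ⊥ := by
  unfold exAntinorm
  rw [if_neg (fun h => hv h.2), if_neg hv]

lemma realAnti_nonneg {v : ℝ × ℝ} (hv : |v.1| ≤ v.2) : 0 ≤ realAnti v :=
  le_min (Real.sqrt_nonneg _) (by linarith [(abs_le.1 hv).2])

lemma realAnti_smul {c : ℝ} (hc : 0 < c) (v : ℝ × ℝ) : realAnti (c • v) = c * realAnti v := by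
  unfold realAnti
  rw [mul_min_of_nonneg _ _ hc.le]
  simp only [Prod.smul_fst, Prod.smul_snd, smul_eq_mul]
  congr 1
  · rw [show (c * v.2) ^ 2 - (c * v.1) ^ 2 = c ^ 2 * (v.2 ^ 2 - v.1 ^ 2) by ring,
      Real.sqrt_mul (by positivity), Real.sqrt_sq hc.le]
  · ring

lemma sqrt_superadd {a b c d : ℝ} (h1 : |a| ≤ b) (h2 : |c| ≤ d) :
    Real.sqrt (b ^ 2 - a ^ 2) + Real.sqrt (d ^ 2 - c ^ 2)
      ≤ Real.sqrt ((b + d) ^ 2 - (a + c) ^ 2) := by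
  have h1' := abs_le.1 h1
  have h2' := abs_le.1 h2
  have e1 : 0 ≤ b ^ 2 - a ^ 2 := by nlinarith
  have e2 : 0 ≤ d ^ 2 - c ^ 2 := by nlinarith
  have hbd : 0 ≤ b * d - a * c := by nlinarith
  have hm : Real.sqrt (b ^ 2 - a ^ 2) * Real.sqrt (d ^ 2 - c ^ 2) ≤ b * d - a * c := by
    rw [← Real.sqrt_mul e1]
    apply Real.sqrt_le_iff.2
    exact ⟨hbd, by nlinarith [sq_nonneg (a * d - b * c)]⟩
  apply Real.le_sqrt_of_sq_le
  nlinarith [Real.sq_sqrt e1, Real.sq_sqrt e2]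

lemma realAnti_superadd {v w : ℝ × ℝ} (hv : |v.1| ≤ v.2) (hw : |w.1| ≤ w.2) :
    realAnti v + realAnti w ≤ realAnti (v + w) := by
  unfold realAnti
  apply le_min
  · exact (add_le_add (min_le_left _ _) (min_le_left _ _)).trans (sqrt_superadd hv hw)
  · refine (add_le_add (min_le_right _ _) (min_le_right _ _)).trans ?_
    simp only [Prod.fst_add, Prod.snd_add]
    linarith

lemma ex_isAntinorm : IsAntinorm {v : ℝ × ℝ | |v.1| ≤ v.2} exAntinorm := by
  refine ⟨?_, ?_, ?_, ?_, ?_, ?_⟩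
  · intro v
    by_cases hv : |v.1| ≤ v.2
    · rw [exAntinorm_of_mem hv]; exact EReal.coe_ne_top _
    · rw [exAntinorm_of_not_mem hv]; exact bot_ne_top
  · intro v hv
    rw [ri_cone] at hv
    have hv : |v.1| < v.2 := hv
    rw [exAntinorm_of_mem hv.le]
    have h := abs_lt.1 hv
    have : 0 < realAnti v := by
      apply lt_min
      · apply Real.sqrt_pos.2; nlinarith
      · linarith
    exact_mod_cast this
  · rintro v ⟨hv, hv'⟩
    rw [ri_cone] at hv'
    have hv : |v.1| ≤ v.2 := hv
    have hv' : ¬ |v.1| < v.2 := hv'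
    have he : |v.1| = v.2 := le_antisymm hv (not_lt.1 hv')
    rw [exAntinorm_of_mem hv]
    have : realAnti v = 0 := by
      unfold realAnti
      rw [← he, sq_abs, sub_self, Real.sqrt_zero, min_eq_left]
      linarith [le_abs_self v.1]
    rw [this]; rfl
  · intro v hv
    exact exAntinorm_of_not_mem hv
  · intro c hc v
    have hiff : |(c • v).1| ≤ (c • v).2 ↔ |v.1| ≤ v.2 := by
      simp only [Prod.smul_fst, Prod.smul_snd, smul_eq_mul, abs_mul, abs_of_pos hc]
      exact mul_le_mul_iff_right₀ hc
    by_cases hv : |v.1| ≤ v.2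
    · rw [exAntinorm_of_mem hv, exAntinorm_of_mem (hiff.2 hv), realAnti_smul hc, EReal.coe_mul]
    · rw [exAntinorm_of_not_mem hv, exAntinorm_of_not_mem (fun h => hv (hiff.1 h)),
        EReal.coe_mul_bot_of_pos hc]
  · intro v w
    by_cases hv : |v.1| ≤ v.2
    · by_cases hw : |w.1| ≤ w.2
      · have hvw : |(v + w).1| ≤ (v + w).2 := by
          simp only [Prod.fst_add, Prod.snd_add]
          exact (abs_add_le _ _).trans (add_le_add hv hw)
        rw [exAntinorm_of_mem hv, exAntinorm_of_mem hw, exAntinorm_of_mem hvw]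
        exact_mod_cast realAnti_superadd hv hw
      · rw [exAntinorm_of_not_mem hw, EReal.add_bot]; exact bot_le
    · rw [exAntinorm_of_not_mem hv, EReal.bot_add]; exact bot_le

lemma ex_continuousOn : ContinuousOn exAntinorm {v : ℝ × ℝ | |v.1| ≤ v.2} := by
  have h : Continuous (fun v : ℝ × ℝ => (realAnti v : EReal)) := by
    apply continuous_coe_real_ereal.comp
    unfold realAnti
    fun_prop
  exact h.continuousOn.congr (fun v hv => exAntinorm_of_mem hv)

lemma exFunctional_apply (v : ℝ × ℝ) : exFunctional v = v.1 - v.2 := by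
  simp [exFunctional]

lemma negDual_interior_nonempty :
    (interior (negDual {v : ℝ × ℝ | |v.1| ≤ v.2})).Nonempty := by
  refine ⟨-ContinuousLinearMap.snd ℝ ℝ ℝ, ?_⟩
  have hsub : {q : (ℝ × ℝ) →L[ℝ] ℝ | q (1, 1) < 0} ∩ {q | q (-1, 1) < 0} ⊆
      negDual {v : ℝ × ℝ | |v.1| ≤ v.2} := by
    rintro q ⟨h1, h2⟩ u hu
    have h1 : q (1, 1) < 0 := h1
    have h2 : q (-1, 1) < 0 := h2
    have hu := abs_le.1 (show |u.1| ≤ u.2 from hu)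
    have hd : u = ((u.2 + u.1) / 2) • ((1, 1) : ℝ × ℝ) + ((u.2 - u.1) / 2) • ((-1, 1) : ℝ × ℝ) := by
      ext <;> simp <;> ring
    rw [hd, map_add, map_smul, map_smul, smul_eq_mul, smul_eq_mul]
    nlinarith
  refine interior_maximal hsub ?_ ?_
  · exact (isOpen_lt (by fun_prop) continuous_const).inter (isOpen_lt (by fun_prop) continuous_const)
  · constructor <;> simp

lemma exFunctional_mem : exFunctional ∈ relBoundary (negDual {v : ℝ × ℝ | |v.1| ≤ v.2}) := by
  refine ⟨?_, ?_⟩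
  · intro u hu
    rw [exFunctional_apply]
    linarith [(abs_le.1 (show |u.1| ≤ u.2 from hu)).2]
  · rw [ri_eq_interior negDual_interior_nonempty]
    intro h
    have hc : Continuous (fun t : ℝ => exFunctional + t • ContinuousLinearMap.fst ℝ ℝ ℝ) := by
      fun_prop
    have hn : ∀ᶠ t in nhds (0 : ℝ), exFunctional + t • ContinuousLinearMap.fst ℝ ℝ ℝ ∈
        negDual {v : ℝ × ℝ | |v.1| ≤ v.2} := by
      apply hc.continuousAt.eventually_mem
      simpa [mem_interior_iff_mem_nhds] using h
    obtain ⟨e, he, hb⟩ := Metric.eventually_nhds_iff.1 hn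
    have h1 := @hb (e / 2) (by rw [Real.dist_eq, sub_zero, abs_of_pos] <;> linarith)
    have h2 := h1 (1, 1) (by simp)
    simp [exFunctional_apply] at h2
    linarith

lemma ex_pDual : pDual exAntinorm exFunctional = {v : ℝ × ℝ | 0 ≤ v.1 ∧ v.1 ≤ v.2} := by
  have key : ∀ w : ℝ × ℝ, ∀ r : ℝ, w ∈ antisphere exAntinorm r →
      |w.1| ≤ w.2 ∧ realAnti w = r := by
    intro w r hw
    have hw : exAntinorm w = (r : EReal) := hw
    by_cases hm : |w.1| ≤ w.2
    · rw [exAntinorm_of_mem hm] at hw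
      exact ⟨hm, by exact_mod_cast hw⟩
    · rw [exAntinorm_of_not_mem hm] at hw
      exact absurd hw (EReal.bot_ne_coe _)
  have hpos : ∀ v : ℝ × ℝ, 0 ≤ v.1 → v.1 ≤ v.2 → exAntinorm v = ((v.2 - v.1 : ℝ) : EReal) := by
    intro v h0 h1
    unfold exAntinorm
    rw [if_pos ⟨h0, by rwa [abs_of_nonneg h0]⟩]
  ext v
  simp only [pDual, mem_iUnion, mem_setOf_eq, mem_Ici, maxSet, exists_prop]
  constructor
  · rintro ⟨r, hr, hv, hmax⟩
    obtain ⟨hm, hvr⟩ := key v r hv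
    have hab := abs_le.1 hm
    refine ⟨?_, hab.2⟩
    by_contra hneg
    push Not at hneg
    have h := hmax (0, r) (by
      show exAntinorm (0, r) = _
      rw [hpos _ le_rfl hr]; simp)
    rw [exFunctional_apply, exFunctional_apply] at h
    simp only [zero_sub] at h
    have hs : r ≤ Real.sqrt (v.2 ^ 2 - v.1 ^ 2) := hvr ▸ min_le_left _ _
    have hs2 : r ^ 2 ≤ v.2 ^ 2 - v.1 ^ 2 := by
      have := Real.sq_sqrt (show 0 ≤ v.2 ^ 2 - v.1 ^ 2 by nlinarith)
      nlinarith
    nlinarith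
  · rintro ⟨h0, h1⟩
    refine ⟨v.2 - v.1, by linarith, hpos v h0 h1, ?_⟩
    intro w hw
    obtain ⟨-, hwr⟩ := key w _ hw
    have : realAnti w ≤ w.2 - w.1 := min_le_right _ _
    rw [exFunctional_apply, exFunctional_apply]
    linarith

lemma ex_ri_subset : intrinsicInterior ℝ (pDual exAntinorm exFunctional)
      ⊆ intrinsicInterior ℝ {v : ℝ × ℝ | |v.1| ≤ v.2} := by
  have hi : (interior {v : ℝ × ℝ | 0 ≤ v.1 ∧ v.1 ≤ v.2}).Nonempty := by
    refine ⟨(1, 2), ?_⟩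
    refine interior_maximal (t := {v : ℝ × ℝ | 0 < v.1} ∩ {v | v.1 < v.2}) ?_ ?_ ?_
    · rintro v ⟨h1, h2⟩
      exact ⟨le_of_lt h1, le_of_lt h2⟩
    · exact (isOpen_lt (by fun_prop) (by fun_prop)).inter (isOpen_lt (by fun_prop) (by fun_prop))
    · constructor <;> simp
  have hsub : {v : ℝ × ℝ | 0 ≤ v.1 ∧ v.1 ≤ v.2} ⊆ {v : ℝ × ℝ | |v.1| ≤ v.2} := by
    rintro v ⟨h0, h1⟩
    show |v.1| ≤ v.2
    rwa [abs_of_nonneg h0]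
  rw [ex_pDual, ri_eq_interior hi, ri_eq_interior (hi.mono (interior_mono hsub))]
  exact interior_mono hsub

/-- the function of Example 1 is a continuous antinorm associated with
`C = {(x,y) : y ≥ |x|}`; the functional `p(x,y) = x - y` lies in the relative boundary of
`C^∨`, is not identically zero on `C`, its cone of maximizers is
`p^∨ = {(x,y) : 0 ≤ x ≤ y}` and `ri(p^∨) ⊆ ri C`. In particular this antinorm is linear
on a subcone adjacent to the boundary of `C`. -/
theorem statement17 :
    IsAntinorm {v : ℝ × ℝ | |v.1| ≤ v.2} exAntinorm ∧
    ContinuousOn exAntinorm {v : ℝ × ℝ | |v.1| ≤ v.2} ∧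
    exFunctional ∈ relBoundary (negDual {v : ℝ × ℝ | |v.1| ≤ v.2}) ∧
    (∃ u ∈ {v : ℝ × ℝ | |v.1| ≤ v.2}, exFunctional u ≠ 0) ∧
    pDual exAntinorm exFunctional = {v : ℝ × ℝ | 0 ≤ v.1 ∧ v.1 ≤ v.2} ∧
    intrinsicInterior ℝ (pDual exAntinorm exFunctional)
      ⊆ intrinsicInterior ℝ {v : ℝ × ℝ | |v.1| ≤ v.2} ∧
    ∃ q ∈ relBoundary (negDual {v : ℝ × ℝ | |v.1| ≤ v.2}),
      (∃ u ∈ {v : ℝ × ℝ | |v.1| ≤ v.2}, q u ≠ 0) ∧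
      intrinsicInterior ℝ (pDual exAntinorm q)
        ⊆ intrinsicInterior ℝ {v : ℝ × ℝ | |v.1| ≤ v.2} := by
  have hne : ∃ u ∈ {v : ℝ × ℝ | |v.1| ≤ v.2}, exFunctional u ≠ 0 :=
    ⟨(0, 1), by simp, by rw [exFunctional_apply]; norm_num⟩
  exact ⟨ex_isAntinorm, ex_continuousOn, exFunctional_mem, hne, ex_pDual, ex_ri_subset,
    exFunctional, exFunctional_mem, hne, ex_ri_subset⟩
end
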